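/- (RLOBPCG convergence: singular vector bound.) Under the same setup as the RLOBPCG singular value bound — A ∈ ℂ^{m×n} of full column rank with singular values σ₁ ≥ … ≥ σ_n > 0, gap := (σ_{n−1}² − σ_n²)/σ_n², S a subspace embedding for A with distortion η < gap/(2+gap), P := VΣ⁻¹ from an SVD SA = UΣV*, v₀ = v_{−1} := P e_n/‖P e_n‖, w_i := P(P*(A*(A v_i) − ‖A v_i‖²·v_i)), and v_{i+1} a unit vector in span{v_{i−1}, v_i, w_i} minimizing ‖Az‖ over unit vectors z in that span — let v_min be a unit right singular vector of A associated with σ_n. Then for every k ≥ 0, |sin∠(v_k, v_min)| ≤ |tan∠(v_k, v_min)| ≤ C^{1/2}·q^{k}, where C := 2η/((1−η)·gap − 2η), q := η + (1−η)/(1+gap), sin²∠(v, v_min) := 1 − |⟨v, v_min⟩|², and tan²∠(v, v_min) := sin²∠(v, v_min)/(1 − sin²∠(v, v_min)). -/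

import Mathlib

/-!
Put `M = Aᴴ A` with eigenvalues `l1 = σₙ² < l2 = σₙ₋₁² ≤ …`, `N = (S A)ᴴ (S A)`, and let
`ρ_k = ‖A v_k‖²` be the Rayleigh quotient of `v_k`. The SVD gives `P Pᴴ = N⁻¹`
(`preconditioner_spec`), so `w_k = N⁻¹ (M v_k - ρ_k v_k)` is a preconditioned residual, and the
span contains the fixed-step iterate `y = v_k - (1 - η²) w_k`. Because
`(1 - η) M ≤ N ≤ (1 + η) M`, the operator `1 - (1 - η²) N⁻¹ M` has `M`-norm at most `η`
(`preconditioned_residual_bound`), so `y` lies in the `M`-ball about `ρ_k M⁻¹ v_k` of radius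
`η ‖v_k - ρ_k M⁻¹ v_k‖_M`.

The heart is the Knyazev–Neymeyr estimate: every vector `y` of that ball has a Rayleigh quotient
`θ` with `(θ - l1) / (l2 - θ) ≤ q² (ρ_k - l1) / (l2 - ρ_k)`. It is proved by an S-procedure
(`sum_contraction`): one multiplier for the ball constraint and one for
`∑ (λ_i - ρ_k) |⟨b_i, v_k⟩|² = 0` reduce it, coordinate by coordinate, to the nonnegativity of a
cubic on `{l1} ∪ [l2, ∞)` (`spectral_cubic_nonneg`). As `v_{k+1}` minimizes `‖A z‖` over unit
vectors of the span, `ρ_{k+1} ≤ θ`.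

For the start, `v_0` minimizes `‖S A u‖` over unit vectors, so
`(1 - η) ρ_0 ≤ (1 + η) l1`, which gives `(ρ_0 - l1) / (l2 - ρ_0) ≤ C`. Finally
`ρ ≥ l1 cos² + l2 sin²` yields `tan² ≤ (ρ - l1) / (l2 - ρ)`. For `η = 0` the initial vector is
already an eigenvector and monotonicity of `ρ_k` suffices.
-/

open Matrix

/-- The linear action of a complex matrix on Euclidean space: `mulE A v = A v`. -/
noncomputable def mulE {m n : ℕ} (A : Matrix (Fin m) (Fin n) ℂ)
    (v : EuclideanSpace ℂ (Fin n)) : EuclideanSpace ℂ (Fin m) :=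
  Matrix.toEuclideanLin A v

/-- `S` is a subspace embedding for `A` with distortion `η`:
`(1-η)‖Ay‖² ≤ ‖SAy‖² ≤ (1+η)‖Ay‖²` for all `y`. -/
def IsSubspaceEmbedding {d m n : ℕ} (S : Matrix (Fin d) (Fin m) ℂ)
    (A : Matrix (Fin m) (Fin n) ℂ) (η : ℝ) : Prop :=
  ∀ y : EuclideanSpace ℂ (Fin n),
    (1 - η) * ‖mulE A y‖ ^ 2 ≤ ‖mulE (S * A) y‖ ^ 2 ∧
      ‖mulE (S * A) y‖ ^ 2 ≤ (1 + η) * ‖mulE A y‖ ^ 2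

/-- `σ` lists the singular values of `A` in decreasing order: `σ` is antitone, nonnegative,
and there is an orthonormal (eigen)basis `B` with `AᴴA (B i) = σᵢ² • B i`. -/
def HasSingularValues {m n : ℕ} (A : Matrix (Fin m) (Fin n) ℂ) (σ : Fin n → ℝ) : Prop :=
  Antitone σ ∧ (∀ i, 0 ≤ σ i) ∧
    ∃ B : Fin n → EuclideanSpace ℂ (Fin n), Orthonormal ℂ B ∧
      ∀ i, mulE (Aᴴ * A) (B i) = ((σ i ^ 2 : ℝ) : ℂ) • B i

/-- The spectral norm (largest singular value) of a matrix, as the operator norm of its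
action between Euclidean spaces. -/
noncomputable def specNorm {m n : ℕ} (A : Matrix (Fin m) (Fin n) ℂ) : ℝ :=
  ‖LinearMap.toContinuousLinearMap (Matrix.toEuclideanLin A)‖

/-! ### Action of matrices on Euclidean space -/

theorem mulE_mul {l m n : ℕ} (A : Matrix (Fin l) (Fin m) ℂ) (B : Matrix (Fin m) (Fin n) ℂ)
    (v : EuclideanSpace ℂ (Fin n)) : mulE (A * B) v = mulE A (mulE B v) := by
  simp [mulE]

theorem mulE_one {n : ℕ} (v : EuclideanSpace ℂ (Fin n)) : mulE 1 v = v := by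
  simp [mulE]

theorem inner_mulE_left {m n : ℕ} (A : Matrix (Fin m) (Fin n) ℂ) (u : EuclideanSpace ℂ (Fin n))
    (w : EuclideanSpace ℂ (Fin m)) : inner ℂ (mulE A u) w = inner ℂ u (mulE Aᴴ w) := by
  rw [mulE, mulE, Matrix.toEuclideanLin_conjTranspose_eq_adjoint, LinearMap.adjoint_inner_right]

theorem norm_mulE_of_isometry {m n : ℕ} {U : Matrix (Fin m) (Fin n) ℂ} (hU : Uᴴ * U = 1)
    (u : EuclideanSpace ℂ (Fin n)) : ‖mulE U u‖ = ‖u‖ := by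
  rw [@norm_eq_sqrt_re_inner ℂ, @norm_eq_sqrt_re_inner ℂ _ _ _ _ u, inner_mulE_left, ← mulE_mul,
    hU, mulE_one]

theorem mulE_diagonal_apply {n : ℕ} (g : Fin n → ℂ) (u : EuclideanSpace ℂ (Fin n)) (i : Fin n) :
    mulE (Matrix.diagonal g) u i = g i * u i := by
  simp [mulE, Matrix.toLpLin_apply, Matrix.mulVec_diagonal]

theorem inner_eigenbasis_mulE {m n : ℕ} {A : Matrix (Fin m) (Fin n) ℂ} {lam : ℝ}
    {b : EuclideanSpace ℂ (Fin n)} (hb : mulE (Aᴴ * A) b = (lam : ℂ) • b)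
    (u : EuclideanSpace ℂ (Fin n)) :
    inner ℂ b (mulE Aᴴ (mulE A u)) = lam * inner ℂ b u := by
  have h := inner_mulE_left (Aᴴ * A) b u
  rw [hb, Matrix.conjTranspose_mul, Matrix.conjTranspose_conjTranspose, mulE_mul,
    inner_smul_left, Complex.conj_ofReal] at h
  exact h.symm

theorem norm_mulE_sq_eq_sum {m n : ℕ} {A : Matrix (Fin m) (Fin n) ℂ} {lam : Fin n → ℝ}
    (b : OrthonormalBasis (Fin n) ℂ (EuclideanSpace ℂ (Fin n)))
    (hb : ∀ i, mulE (Aᴴ * A) (b i) = (lam i : ℂ) • b i) (u : EuclideanSpace ℂ (Fin n)) :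
    ‖mulE A u‖ ^ 2 = ∑ i, lam i * ‖inner ℂ (b i) u‖ ^ 2 := by
  have h : ((‖mulE A u‖ ^ 2 : ℝ) : ℂ) = ((∑ i, lam i * ‖inner ℂ (b i) u‖ ^ 2 : ℝ) : ℂ) := by
    have h0 := inner_self_eq_norm_sq_to_K (𝕜 := ℂ) (mulE A u)
    rw [inner_mulE_left, ← b.sum_inner_mul_inner] at h0
    push_cast
    refine h0.symm.trans ?_
    refine Finset.sum_congr rfl fun i _ => ?_
    rw [inner_eigenbasis_mulE (hb i), ← inner_conj_symm, mul_left_comm, Complex.conj_mul']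
  exact_mod_cast h

/-! ### The contraction estimate in coordinates -/

/-- Completing the square: the minimum over `y` of `α ‖y‖² + β ‖y - b‖²`. The weight `α` may be
negative. -/
theorem sq_combination_lower_bound (α β : ℝ) (h : 0 < α + β) (y b : ℂ) :
    α * β / (α + β) * ‖b‖ ^ 2 ≤ α * ‖y‖ ^ 2 + β * ‖y - b‖ ^ 2 := by
  rw [div_mul_eq_mul_div, div_le_iff₀ h]
  simp only [← Complex.normSq_eq_norm_sq, Complex.normSq_apply, Complex.sub_re, Complex.sub_im]
  nlinarith [sq_nonneg ((α + β) * y.re - β * b.re), sq_nonneg ((α + β) * y.im - β * b.im)]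

/-- The one-variable inequality behind the contraction. The cubic vanishes at `x = l1` and `x = l2`;
its remaining linear factor is positive for `x ≥ 0`. The coefficient
`(1 - l1 / l2) * (γ * l2 + (1 - γ) * ρ)` is the multiplier of the constraint that `ρ` is the
Rayleigh quotient, chosen to make the cubic vanish at both `l1` and `l2`. -/
theorem spectral_cubic_nonneg {l1 l2 ρ γ q x : ℝ} (h1 : 0 < l1) (h12 : l1 < l2) (hρ1 : l1 ≤ ρ)
    (hρ2 : ρ < l2) (hγ0 : 0 < γ) (hγ1 : γ < 1) (hq : q = γ + (1 - γ) * (l1 / l2))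
    (hx : x = l1 ∨ l2 ≤ x) :
    0 ≤ l2 * ρ * (l1 * (l2 - ρ) + q ^ 2 * l2 * (ρ - l1) - x * (l2 - ρ + q ^ 2 * (ρ - l1)))
        - γ * (l2 - l1) * (γ * l2 + (1 - γ) * x) * (x - ρ) ^ 2
        + (1 - l1 / l2) * (γ * l2 + (1 - γ) * ρ) * x * (γ * l2 + (1 - γ) * x) * (x - ρ) := by
  have h2 : 0 < l2 := h1.trans h12
  obtain ⟨k, hk⟩ : ∃ k, k = l1 / l2 := ⟨_, rfl⟩
  have hl1 : l1 = k * l2 := by rw [hk]; field_simp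
  have hk0 : 0 < k := by rw [hk]; positivity
  have hk1 : 0 < 1 - k := by rw [hk, sub_pos, div_lt_one h2]; exact h12
  have hγ' : 0 < 1 - γ := by linarith
  have hρ0 : 0 < ρ := by linarith
  rw [← hk] at hq ⊢
  have hq0 : 0 < q := by rw [hq]; positivity
  have key : l2 * ρ * (l1 * (l2 - ρ) + q ^ 2 * l2 * (ρ - l1) - x * (l2 - ρ + q ^ 2 * (ρ - l1)))
        - γ * (l2 - l1) * (γ * l2 + (1 - γ) * x) * (x - ρ) ^ 2
        + (1 - k) * (γ * l2 + (1 - γ) * ρ) * x * (γ * l2 + (1 - γ) * x) * (x - ρ)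
      = (x - l1) * (x - l2) * ((1 - γ) * (1 - k) * ρ *
          ((1 - γ) * x + (l2 * q + γ * ρ + (l2 - ρ)))) := by
    rw [hq, hl1]; ring
  rw [key]
  rcases hx with rfl | hx
  · simp
  · have : 0 ≤ x - l1 := by linarith
    have : 0 ≤ x - l2 := by linarith
    have : 0 ≤ l2 - ρ := by linarith
    have : 0 ≤ x := by linarith
    positivity

/-- The sharp contraction estimate in eigenbasis coordinates. Here `lam` lists the eigenvalues of
`M = Aᴴ A`, `z` the coordinates of `M⁻¹ x` with `ρ` the Rayleigh quotient of `x`, and `y` those of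
the new iterate, which lies in the `M`-ball of radius `γ ‖x - ρ M⁻¹ x‖_M` about `ρ M⁻¹ x`.
The conclusion `E ‖y‖²_M ≤ R ‖y‖²` says that the Rayleigh quotient `θ` of `y` satisfies
`(θ - l1) / (l2 - θ) ≤ q² (ρ - l1) / (l2 - ρ)`. -/
theorem sum_contraction {ι : Type*} [Fintype ι] {l1 l2 ρ γ q : ℝ} (h1 : 0 < l1) (h12 : l1 < l2)
    (hρ1 : l1 ≤ ρ) (hρ2 : ρ < l2) (hγ0 : 0 < γ) (hγ1 : γ < 1)
    (hq : q = γ + (1 - γ) * (l1 / l2)) (lam : ι → ℝ) (hlam : ∀ i, lam i = l1 ∨ l2 ≤ lam i)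
    (z y : ι → ℂ)
    (hz : ∑ i, lam i ^ 2 * (lam i - ρ) * ‖z i‖ ^ 2 = 0)
    (hy : ∑ i, lam i * ‖y i - ρ * z i‖ ^ 2 ≤ γ ^ 2 * ∑ i, lam i * (lam i - ρ) ^ 2 * ‖z i‖ ^ 2) :
    (l2 - ρ + q ^ 2 * (ρ - l1)) * ∑ i, lam i * ‖y i‖ ^ 2
      ≤ (l1 * (l2 - ρ) + q ^ 2 * l2 * (ρ - l1)) * ∑ i, ‖y i‖ ^ 2 := by
  have h2 : 0 < l2 := h1.trans h12
  have hρ0 : 0 < ρ := by linarith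
  have hγ' : 0 < 1 - γ := by linarith
  have hk0 : 0 < l1 / l2 := by positivity
  have hk1 : l1 / l2 < 1 := by rw [div_lt_one h2]; exact h12
  have hq0 : 0 < q := by rw [hq]; positivity
  have hq1 : q ≤ 1 := by rw [hq]; nlinarith
  have hc := fun i => spectral_cubic_nonneg h1 h12 hρ1 hρ2 hγ0 hγ1 hq (hlam i)
  have hlam0 : ∀ i, 0 < lam i := fun i => by rcases hlam i with h | h <;> linarith
  obtain ⟨R, hR⟩ : ∃ R, R = l1 * (l2 - ρ) + q ^ 2 * l2 * (ρ - l1) := ⟨_, rfl⟩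
  obtain ⟨E, hE⟩ : ∃ E, E = l2 - ρ + q ^ 2 * (ρ - l1) := ⟨_, rfl⟩
  obtain ⟨K, hK⟩ : ∃ K, K = (1 - l1 / l2) * (γ * l2 + (1 - γ) * ρ) := ⟨_, rfl⟩
  rw [← hR, ← hE]
  simp only [← hR, ← hE, ← hK] at hc
  have a3 : 0 < l2 - ρ := by linarith
  have a4 : 0 ≤ ρ - l1 := by linarith
  have hR0 : 0 < R := by rw [hR]; positivity
  have hE0 : 0 < E := by rw [hE]; positivity
  have hRρ : R ≤ ρ * (l2 - l1) := by
    have : 0 ≤ (1 - q ^ 2) * (l2 * (ρ - l1)) := by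
      have : 0 ≤ 1 - q ^ 2 := by nlinarith
      positivity
    rw [hR]; nlinarith
  -- `W` weights the ball constraint; it makes the sum of the two weights below factor as
  -- `R * (γ * l2 + (1 - γ) * x)`
  set W := γ * l2 * E + (1 - γ) * R with hW
  have hW0 : 0 < W := by positivity
  have coord : ∀ i, 0 ≤ γ * l2 * (R - lam i * E) * ‖y i‖ ^ 2
      + W * (lam i * ‖y i - ρ * z i‖ ^ 2)
      - W * γ ^ 2 * (lam i * (lam i - ρ) ^ 2 * ‖z i‖ ^ 2)
      + W * (γ * ρ * K / R) * (lam i ^ 2 * (lam i - ρ) * ‖z i‖ ^ 2) := by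
    intro i
    have hl := hlam0 i
    have hc := hc i
    set x := lam i
    have hm : 0 < γ * l2 + (1 - γ) * x := by positivity
    have hsum : γ * l2 * (R - x * E) + W * x = R * (γ * l2 + (1 - γ) * x) := by rw [hW]; ring
    have hsq := sq_combination_lower_bound (γ * l2 * (R - x * E)) (W * x)
      (by rw [hsum]; positivity) (y i) (ρ * z i)
    rw [hsum, norm_mul, mul_pow, Complex.norm_real, Real.norm_eq_abs, sq_abs] at hsq
    have hdom : 0 ≤ γ * l2 * (R - x * E) * (W * x) / (R * (γ * l2 + (1 - γ) * x)) * ρ ^ 2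
        - W * γ ^ 2 * (x * (x - ρ) ^ 2) + W * (γ * ρ * K / R) * (x ^ 2 * (x - ρ)) := by
      have e : γ * l2 * (R - x * E) * (W * x) / (R * (γ * l2 + (1 - γ) * x)) * ρ ^ 2
          - W * γ ^ 2 * (x * (x - ρ) ^ 2) + W * (γ * ρ * K / R) * (x ^ 2 * (x - ρ))
        = W * x * γ / (R * (γ * l2 + (1 - γ) * x)) *
          (ρ * (l2 * ρ * (R - x * E) - γ * (l2 - l1) * (γ * l2 + (1 - γ) * x) * (x - ρ) ^ 2
              + K * x * (γ * l2 + (1 - γ) * x) * (x - ρ))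
            + γ * (γ * l2 + (1 - γ) * x) * (ρ * (l2 - l1) - R) * (x - ρ) ^ 2) := by
        field_simp
        ring
      rw [e]
      have : 0 ≤ ρ * (l2 - l1) - R := by linarith
      positivity
    have := mul_nonneg hdom (sq_nonneg ‖z i‖)
    linear_combination hsq + this
  have hsum := Finset.sum_nonneg (fun i (_ : i ∈ Finset.univ) => coord i)
  simp only [Finset.sum_add_distrib, Finset.sum_sub_distrib, ← Finset.mul_sum, hz] at hsum
  have e : ∑ i, γ * l2 * (R - lam i * E) * ‖y i‖ ^ 2
      = γ * l2 * (R * ∑ i, ‖y i‖ ^ 2 - E * ∑ i, lam i * ‖y i‖ ^ 2) := by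
    simp only [Finset.mul_sum, ← Finset.sum_sub_distrib]
    exact Finset.sum_congr rfl fun i _ => by ring
  rw [e] at hsum
  have h3 := mul_le_mul_of_nonneg_left hy hW0.le
  have h4 : 0 ≤ γ * l2 * (R * ∑ i, ‖y i‖ ^ 2 - E * ∑ i, lam i * ‖y i‖ ^ 2) := by
    linear_combination hsum + h3
  have := nonneg_of_mul_nonneg_right h4 (by positivity)
  linarith

/-! ### The preconditioned step -/

/-- With `M = Aᴴ A`, `N = Bᴴ B`, `(1 - η) M ≤ N ≤ (1 + η) M` and `N w = M f`, the operator
`1 - (1 - η²) N⁻¹ M` has `M`-norm at most `η`. Polarizing the Hermitian form of `N - M` bounds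
`f - w` by `η w` in the `M`-norm, which is equivalent to the claim. -/
theorem preconditioned_residual_bound {X F G : Type*} [AddCommGroup X] [Module ℂ X]
    [NormedAddCommGroup F] [InnerProductSpace ℂ F] [NormedAddCommGroup G] [InnerProductSpace ℂ G]
    (A : X →ₗ[ℂ] F) (B : X →ₗ[ℂ] G) {η : ℝ} (hη0 : 0 < η) (hη1 : η < 1)
    (hlo : ∀ u, (1 - η) * ‖A u‖ ^ 2 ≤ ‖B u‖ ^ 2) (hhi : ∀ u, ‖B u‖ ^ 2 ≤ (1 + η) * ‖A u‖ ^ 2)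
    (f w : X) (hfw : ∀ u, inner ℂ (A u) (A f) = inner ℂ (B u) (B w)) :
    ‖A (f - ((1 - η ^ 2 : ℝ) : ℂ) • w)‖ ^ 2 ≤ η ^ 2 * ‖A f‖ ^ 2 := by
  set u := f - w with hu
  have hf : f = u + w := by simp [hu]
  have h1 := hhi (u + (η : ℂ) • w)
  have h2 := hlo (u - (η : ℂ) • w)
  have h3 := congrArg Complex.re (hfw u)
  have hd : f - ((1 - η ^ 2 : ℝ) : ℂ) • w = u + ((η ^ 2 : ℝ) : ℂ) • w := by
    rw [hf]; push_cast; module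
  rw [hd]
  rw [hf] at h3 ⊢
  simp only [map_add, map_sub, map_smul, inner_add_right, Complex.add_re,
    @norm_add_sq ℂ, @norm_sub_sq ℂ, inner_smul_right, norm_smul, RCLike.re_to_complex,
    Complex.re_ofReal_mul, Complex.norm_real, Real.norm_eq_abs, mul_pow, sq_abs] at h1 h2 h3 ⊢
  have h4 : (inner ℂ (A u) (A u)).re = ‖A u‖ ^ 2 := by
    rw [inner_self_eq_norm_sq_to_K]; norm_cast
  rw [h4] at h3
  have h5 : ‖A u‖ ^ 2 ≤ η ^ 2 * ‖A w‖ ^ 2 := by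
    have : η * ‖A u‖ ^ 2 ≤ η * (η ^ 2 * ‖A w‖ ^ 2) := by nlinarith
    exact le_of_mul_le_mul_left this hη0
  nlinarith [mul_le_mul_of_nonneg_left h5 (show 0 ≤ 1 - η ^ 2 by nlinarith)]

/-- One preconditioned gradient step from `x` along `w = N⁻¹ (M x - ρ x)` with step length
`1 - η²` contracts `(ρ - l1) / (l2 - ρ)` by the factor `q²`, stated without division. -/
theorem rayleigh_step {d m n : ℕ} {A : Matrix (Fin m) (Fin n) ℂ} {S : Matrix (Fin d) (Fin m) ℂ}
    {l1 l2 η q : ℝ} (h1 : 0 < l1) (h12 : l1 < l2) (hη0 : 0 < η) (hη1 : η < 1)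
    (hS : IsSubspaceEmbedding S A η) (hq : q = η + (1 - η) * (l1 / l2))
    (b : OrthonormalBasis (Fin n) ℂ (EuclideanSpace ℂ (Fin n))) (lam : Fin n → ℝ)
    (hb : ∀ i, mulE (Aᴴ * A) (b i) = (lam i : ℂ) • b i) (hlam : ∀ i, lam i = l1 ∨ l2 ≤ lam i)
    (x w : EuclideanSpace ℂ (Fin n)) (hx : ‖x‖ = 1) (ρ : ℝ) (hρ : ρ = ‖mulE A x‖ ^ 2)
    (hρ1 : l1 ≤ ρ) (hρ2 : ρ < l2)
    (hw : mulE (S * A)ᴴ (mulE (S * A) w) = mulE Aᴴ (mulE A x) - (ρ : ℂ) • x) :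
    ∃ y ∈ Submodule.span ℂ ({x, w} : Set (EuclideanSpace ℂ (Fin n))), y ≠ 0 ∧
      (l2 - ρ + q ^ 2 * (ρ - l1)) * ‖mulE A y‖ ^ 2
        ≤ (l1 * (l2 - ρ) + q ^ 2 * l2 * (ρ - l1)) * ‖y‖ ^ 2 := by
  have hlam0 : ∀ i, 0 < lam i := fun i => by rcases hlam i with h | h <;> linarith
  have hη2 : 0 < 1 - η ^ 2 := by nlinarith
  refine ⟨x - ((1 - η ^ 2 : ℝ) : ℂ) • w, ?_, ?_, ?_⟩
  · exact sub_mem (Submodule.subset_span (by simp))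
      (Submodule.smul_mem _ _ (Submodule.subset_span (by simp)))
  · intro h0
    rw [sub_eq_zero] at h0
    -- pairing the residual equation with `x` gives `(1 - η²)⁻¹ ‖S A x‖² = ‖A x‖² - ρ = 0`
    have h2 : inner ℂ x (mulE (S * A)ᴴ (mulE (S * A) w)) = 0 := by
      rw [hw, inner_sub_right, ← inner_mulE_left, inner_smul_right, inner_self_eq_norm_sq_to_K,
        inner_self_eq_norm_sq_to_K, hx, hρ]
      simp
    rw [← inner_mulE_left] at h2
    have h3 : inner ℂ (mulE (S * A) x) (mulE (S * A) x) = 0 := by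
      nth_rewrite 2 [h0]
      rw [mulE, mulE, map_smul, inner_smul_right]
      rw [mulE, mulE] at h2
      rw [h2, mul_zero]
    have h4 : mulE (S * A) x = 0 := inner_self_eq_zero.mp h3
    have h5 := (hS x).1
    rw [h4, ← hρ] at h5
    simp only [norm_zero] at h5
    nlinarith
  · -- `z = (Aᴴ A)⁻¹ x`, built from its coordinates in the eigenbasis
    obtain ⟨z, hz⟩ : ∃ z : EuclideanSpace ℂ (Fin n),
        ∀ i, inner ℂ (b i) x = lam i * inner ℂ (b i) z := by
      refine ⟨b.repr.symm (WithLp.toLp 2 fun i => inner ℂ (b i) x / lam i), fun i => ?_⟩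
      rw [← b.repr_apply_apply, ← b.repr_apply_apply, LinearIsometryEquiv.apply_symm_apply]
      have : (lam i : ℂ) ≠ 0 := by exact_mod_cast (hlam0 i).ne'
      simp only [b.repr_apply_apply]
      field_simp
    have hMz : mulE Aᴴ (mulE A z) = x := by
      apply b.repr.injective
      ext i
      rw [b.repr_apply_apply, b.repr_apply_apply, inner_eigenbasis_mulE (hb i), hz]
    have hbd := preconditioned_residual_bound (Matrix.toEuclideanLin A)
      (Matrix.toEuclideanLin (S * A)) hη0 hη1 (fun u => (hS u).1) (fun u => (hS u).2)
      (x - (ρ : ℂ) • z) w (fun u => by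
        change inner ℂ (mulE A u) (mulE A _) = inner ℂ (mulE (S * A) u) (mulE (S * A) w)
        rw [inner_mulE_left, inner_mulE_left, hw]
        nth_rewrite 3 [← hMz]
        simp only [mulE, map_sub, map_smul])
    change ‖mulE A _‖ ^ 2 ≤ η ^ 2 * ‖mulE A _‖ ^ 2 at hbd
    rw [norm_mulE_sq_eq_sum b hb, norm_mulE_sq_eq_sum b hb] at hbd
    rw [norm_mulE_sq_eq_sum b hb, ← b.sum_sq_norm_inner_right]
    refine sum_contraction h1 h12 hρ1 hρ2 hη0 hη1 hq lam hlam (fun i => inner ℂ (b i) z) _ ?_ ?_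
    · have e1 := norm_mulE_sq_eq_sum b hb x
      have e2 := b.sum_sq_norm_inner_right x
      rw [hx] at e2
      have e3 : ∑ i, lam i ^ 2 * (lam i - ρ) * ‖inner ℂ (b i) z‖ ^ 2
          = ∑ i, lam i * ‖inner ℂ (b i) x‖ ^ 2 - ρ * ∑ i, ‖inner ℂ (b i) x‖ ^ 2 := by
        rw [Finset.mul_sum, ← Finset.sum_sub_distrib]
        refine Finset.sum_congr rfl fun i _ => ?_
        rw [hz, norm_mul, Complex.norm_real, Real.norm_eq_abs, mul_pow, sq_abs]
        ring
      rw [e3, e2, ← e1, ← hρ]; ring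
    · refine (le_of_eq (Finset.sum_congr rfl fun i _ => ?_)).trans (hbd.trans
        (le_of_eq (congrArg (η ^ 2 * ·) (Finset.sum_congr rfl fun i _ => ?_))))
      · congr 3
        simp only [inner_sub_right, inner_smul_right]
        ring
      · rw [inner_sub_right, inner_smul_right, hz, ← sub_mul, norm_mul, mul_pow,
          ← Complex.ofReal_sub, Complex.norm_real, Real.norm_eq_abs, sq_abs]
        ring

/-! ### The sketched SVD -/

/-- `P Pᴴ` is the inverse of the Gram matrix `Mᴴ M`. -/
theorem preconditioner_spec {d n : ℕ} {M : Matrix (Fin d) (Fin n) ℂ}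
    {U : Matrix (Fin d) (Fin n) ℂ} {V P : Matrix (Fin n) (Fin n) ℂ} {s : Fin n → ℝ}
    (hU : Uᴴ * U = 1) (hV : Vᴴ * V = 1) (hs : ∀ i, s i ≠ 0)
    (hSVD : M = U * Matrix.diagonal (fun i => (s i : ℂ)) * Vᴴ)
    (hP : P = V * Matrix.diagonal (fun i => ((s i : ℂ))⁻¹)) :
    Mᴴ * M * (P * Pᴴ) = 1 := by
  have hV' : V * Vᴴ = 1 := mul_eq_one_comm.mp hV
  have hD : (Matrix.diagonal (fun i => (s i : ℂ)))ᴴ = Matrix.diagonal (fun i => (s i : ℂ)) := by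
    rw [Matrix.diagonal_conjTranspose]; congr 1; ext i; simp
  have hD' : (Matrix.diagonal (fun i => (s i : ℂ)⁻¹))ᴴ
      = Matrix.diagonal (fun i => (s i : ℂ)⁻¹) := by
    rw [Matrix.diagonal_conjTranspose]; congr 1; ext i; simp
  have hDD : Matrix.diagonal (fun i => (s i : ℂ)) * Matrix.diagonal (fun i => (s i : ℂ)⁻¹) = 1 := by
    rw [Matrix.diagonal_mul_diagonal, ← Matrix.diagonal_one]
    congr 1; ext i
    exact mul_inv_cancel₀ (by exact_mod_cast hs i)
  rw [hSVD, hP]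
  simp only [Matrix.conjTranspose_mul, Matrix.conjTranspose_conjTranspose, hD, hD']
  set D := Matrix.diagonal (fun i => (s i : ℂ))
  set D' := Matrix.diagonal (fun i => (s i : ℂ)⁻¹)
  calc V * (D * Uᴴ) * (U * D * Vᴴ) * (V * D' * (D' * Vᴴ))
      = V * D * (Uᴴ * U) * D * (Vᴴ * V) * D' * D' * Vᴴ := by simp only [Matrix.mul_assoc]
    _ = V * D * (D * D') * D' * Vᴴ := by rw [hU, hV]; simp only [Matrix.mul_assoc, Matrix.one_mul]
    _ = V * (D * D') * Vᴴ := by rw [hDD, Matrix.mul_one, Matrix.mul_assoc V, hDD]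
    _ = 1 := by rw [hDD, Matrix.mul_one, hV']

theorem norm_mulE_svd {d n : ℕ} {M : Matrix (Fin d) (Fin n) ℂ} {U : Matrix (Fin d) (Fin n) ℂ}
    {V : Matrix (Fin n) (Fin n) ℂ} {s : Fin n → ℝ} (hU : Uᴴ * U = 1)
    (hSVD : M = U * Matrix.diagonal (fun i => (s i : ℂ)) * Vᴴ) (u : EuclideanSpace ℂ (Fin n)) :
    ‖mulE M u‖ ^ 2 = ∑ i, s i ^ 2 * ‖mulE Vᴴ u i‖ ^ 2 := by
  rw [hSVD, mulE_mul, mulE_mul, norm_mulE_of_isometry hU, EuclideanSpace.norm_sq_eq]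
  refine Finset.sum_congr rfl fun i _ => ?_
  rw [mulE_diagonal_apply, norm_mul, Complex.norm_real, Real.norm_eq_abs, mul_pow, sq_abs]

/-- The normalized vector `P e_j`, with `s j` the least singular value of `M`, minimizes `‖M u‖` over
unit vectors `u`. -/
theorem initial_rayleigh_bound {n : ℕ} {d : ℕ} {M U : Matrix (Fin d) (Fin n) ℂ}
    {V P : Matrix (Fin n) (Fin n) ℂ} {s : Fin n → ℝ}
    (hU : Uᴴ * U = 1) (hV : Vᴴ * V = 1) (hs : ∀ i, 0 < s i)
    (hSVD : M = U * Matrix.diagonal (fun i => (s i : ℂ)) * Vᴴ)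
    (hP : P = V * Matrix.diagonal (fun i => ((s i : ℂ))⁻¹)) (j : Fin n) (hj : ∀ i, s j ≤ s i)
    (x : EuclideanSpace ℂ (Fin n))
    (hx : x = ‖mulE P (EuclideanSpace.single j (1 : ℂ))‖⁻¹ • mulE P (EuclideanSpace.single j 1))
    (hx1 : ‖x‖ = 1) (u : EuclideanSpace ℂ (Fin n)) (hu : ‖u‖ = 1) :
    ‖mulE M x‖ ^ 2 ≤ ‖mulE M u‖ ^ 2 := by
  have hV' : Vᴴᴴ * Vᴴ = 1 := by
    rw [Matrix.conjTranspose_conjTranspose]; exact mul_eq_one_comm.mp hV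
  have hc : ∀ v : EuclideanSpace ℂ (Fin n), ‖v‖ = 1 → ∑ i, ‖mulE Vᴴ v i‖ ^ 2 = 1 := by
    intro v hv
    rw [← EuclideanSpace.norm_sq_eq, norm_mulE_of_isometry hV', hv, one_pow]
  have hx0 : ∀ i, i ≠ j → mulE Vᴴ x i = 0 := by
    intro i hi
    have : mulE Vᴴ x = ‖mulE P (EuclideanSpace.single j (1 : ℂ))‖⁻¹ •
        mulE (Matrix.diagonal (fun i => ((s i : ℂ))⁻¹)) (EuclideanSpace.single j 1) := by
      rw [← mulE_one (mulE (Matrix.diagonal _) _), ← hV, mulE_mul, ← mulE_mul V, ← hP]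
      nth_rewrite 1 [hx]
      exact LinearMap.map_smul_of_tower (Matrix.toEuclideanLin Vᴴ) _ _
    rw [this, PiLp.smul_apply, mulE_diagonal_apply]
    simp [hi]
  rw [norm_mulE_svd hU hSVD, norm_mulE_svd hU hSVD]
  calc ∑ i, s i ^ 2 * ‖mulE Vᴴ x i‖ ^ 2 = ∑ i, s j ^ 2 * ‖mulE Vᴴ x i‖ ^ 2 := by
        refine Finset.sum_congr rfl fun i _ => ?_
        by_cases hi : i = j
        · rw [hi]
        · rw [hx0 i hi]; simp
    _ = ∑ i, s j ^ 2 * ‖mulE Vᴴ u i‖ ^ 2 := by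
        rw [← Finset.mul_sum, ← Finset.mul_sum, hc x hx1, hc u hu]
    _ ≤ ∑ i, s i ^ 2 * ‖mulE Vᴴ u i‖ ^ 2 := by
        refine Finset.sum_le_sum fun i _ => ?_
        have := hj i
        have := (hs j).le
        gcongr

/-! ### Convergence -/

set_option maxHeartbeats 1000000 in
/-- RLOBPCG convergence: singular vector bound, Theorem 1.2, eq. (1.6):
under the same setup as the singular value bound, with `v_min` a unit right singular
vector for `σₙ`, for every `k`:
`|sin∠(v_k, v_min)| ≤ |tan∠(v_k, v_min)| ≤ √C · q^k`, where
`sin²∠ = 1 − |⟨v_k, v_min⟩|²` and `tan²∠ = sin²∠/(1 − sin²∠)`. -/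
theorem rlobpcg_singular_vector_convergence
    {d m n : ℕ} (hn : 2 ≤ n)
    (A : Matrix (Fin m) (Fin n) ℂ)
    (hrank : Function.Injective (mulE A))
    (σ : Fin n → ℝ) (hσ : HasSingularValues A σ) (hpos : ∀ i, 0 < σ i)
    (gap : ℝ)
    (hgap : gap = (σ ⟨n - 2, by omega⟩ ^ 2 - σ ⟨n - 1, by omega⟩ ^ 2) / σ ⟨n - 1, by omega⟩ ^ 2)
    (S : Matrix (Fin d) (Fin m) ℂ) (η : ℝ) (hη0 : 0 ≤ η) (hη1 : η < 1)
    (hS : IsSubspaceEmbedding S A η)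
    (hηgap : η < gap / (2 + gap))
    (U : Matrix (Fin d) (Fin n) ℂ) (V : Matrix (Fin n) (Fin n) ℂ) (s : Fin n → ℝ)
    (hU : Uᴴ * U = 1) (hV : Vᴴ * V = 1) (hs0 : ∀ i, 0 ≤ s i) (hsa : Antitone s)
    (hSVD : S * A = U * Matrix.diagonal (fun i => (s i : ℂ)) * Vᴴ)
    (P : Matrix (Fin n) (Fin n) ℂ)
    (hP : P = V * Matrix.diagonal (fun i => ((s i : ℂ))⁻¹))
    (e : EuclideanSpace ℂ (Fin n))
    (he : e = EuclideanSpace.single ⟨n - 1, by omega⟩ (1 : ℂ))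
    (v : ℕ → EuclideanSpace ℂ (Fin n))
    (hv0 : v 0 = ‖mulE P e‖⁻¹ • mulE P e)
    (w : ℕ → EuclideanSpace ℂ (Fin n))
    (hw : ∀ i : ℕ, w i = mulE P (mulE Pᴴ
      (mulE Aᴴ (mulE A (v i)) - ((‖mulE A (v i)‖ ^ 2 : ℝ) : ℂ) • v i)))
    (hunit : ∀ i : ℕ, ‖v i‖ = 1)
    (hmem : ∀ i : ℕ, v (i + 1) ∈
      Submodule.span ℂ ({v (i - 1), v i, w i} : Set (EuclideanSpace ℂ (Fin n))))
    (hmin : ∀ i : ℕ, ∀ z ∈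
      Submodule.span ℂ ({v (i - 1), v i, w i} : Set (EuclideanSpace ℂ (Fin n))),
      ‖z‖ = 1 → ‖mulE A (v (i + 1))‖ ≤ ‖mulE A z‖)
    (vmin : EuclideanSpace ℂ (Fin n)) (hvmin1 : ‖vmin‖ = 1)
    (hvmin2 : mulE (Aᴴ * A) vmin = ((σ ⟨n - 1, by omega⟩ ^ 2 : ℝ) : ℂ) • vmin)
    (C q : ℝ) (hC : C = 2 * η / ((1 - η) * gap - 2 * η))
    (hq : q = η + (1 - η) / (1 + gap))
    (sin2 tan2 : ℕ → ℝ)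
    (hsin2 : ∀ k, sin2 k = 1 - ‖@inner ℂ _ _ (v k) vmin‖ ^ 2)
    (htan2 : ∀ k, tan2 k = sin2 k / (1 - sin2 k)) :
    ∀ k : ℕ, Real.sqrt (sin2 k) ≤ Real.sqrt (tan2 k) ∧
      Real.sqrt (tan2 k) ≤ Real.sqrt C * q ^ k := by
  obtain ⟨hσa, -, B, hBo, hBe⟩ := hσ
  have hL : n - 1 < n := by omega
  have hL2 : n - 2 < n := by omega
  obtain ⟨L, hLdef⟩ : ∃ L : Fin n, L = ⟨n - 1, hL⟩ := ⟨_, rfl⟩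
  rw [← hLdef] at hgap he hvmin2
  have hle : ∀ i : Fin n, i ≤ L := fun i => by rw [hLdef, Fin.le_def]; have := i.2; simp; omega
  set l1 := σ L ^ 2 with hl1
  set l2 := σ ⟨n - 2, hL2⟩ ^ 2 with hl2
  have h1 : 0 < l1 := pow_pos (hpos L) 2
  have h12' : l1 ≤ l2 := pow_le_pow_left₀ (hpos L).le (hσa (hle _)) 2
  have hg0 : 0 ≤ gap := by rw [hgap]; exact div_nonneg (by linarith) h1.le
  have hg : 0 < gap := by
    rcases hg0.eq_or_lt with h | h
    · rw [← h] at hηgap; simp at hηgap; linarith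
    · exact h
  have hl2g : l2 = (1 + gap) * l1 := by rw [hgap]; field_simp; ring
  have h12 : l1 < l2 := by rw [hl2g]; nlinarith
  have hden : 0 < (1 - η) * gap - 2 * η := by
    rw [lt_div_iff₀ (by linarith)] at hηgap; linarith
  have hq' : q = η + (1 - η) * (l1 / l2) := by rw [hq, hl2g]; field_simp
  have hq0 : 0 ≤ q := by
    rw [hq]; have : 0 < 1 - η := by linarith
    positivity
  have hC0 : 0 ≤ C := by rw [hC]; positivity
  have : Nonempty (Fin n) := ⟨L⟩
  let b : OrthonormalBasis (Fin n) ℂ (EuclideanSpace ℂ (Fin n)) :=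
    (basisOfOrthonormalOfCardEqFinrank hBo (by simp)).toOrthonormalBasis (by simpa using hBo)
  have hbB : ∀ i, b i = B i := fun i => by simp [b]
  have hb : ∀ i, mulE (Aᴴ * A) (b i) = ((σ i ^ 2 : ℝ) : ℂ) • b i := fun i => by
    rw [hbB]; exact hBe i
  have hlam2 : ∀ i, i ≠ L → l2 ≤ σ i ^ 2 := fun i hi => by
    refine pow_le_pow_left₀ (hpos _).le (hσa ?_) 2
    rw [hLdef, Ne, Fin.ext_iff] at hi
    rw [Fin.le_def]; have := i.2; simp at hi ⊢; omega
  have hlam : ∀ i, σ i ^ 2 = l1 ∨ l2 ≤ σ i ^ 2 := fun i => by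
    by_cases hi : i = L
    · left; rw [hi]
    · exact Or.inr (hlam2 i hi)
  -- `vmin` is a multiple of the last eigenvector, so it sees only the last coordinate
  have hv_off : ∀ i, i ≠ L → inner ℂ (b i) vmin = 0 := fun i hi => by
    have h := inner_eigenbasis_mulE (hb i) vmin
    rw [← mulE_mul, hvmin2, inner_smul_right, ← sub_eq_zero, ← sub_mul] at h
    refine (mul_eq_zero.mp h).resolve_left ?_
    rw [← Complex.ofReal_sub]
    have := hlam2 i hi
    exact_mod_cast (by linarith : l1 - σ i ^ 2 < 0).ne
  have hv_norm : ‖inner ℂ (b L) vmin‖ = 1 := by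
    have h := b.sum_sq_norm_inner_right vmin
    rw [Finset.sum_eq_single L (fun i _ hi => by rw [hv_off i hi]; simp) (by simp), hvmin1] at h
    nlinarith [norm_nonneg (inner ℂ (b L) vmin)]
  have hcos : ∀ x : EuclideanSpace ℂ (Fin n),
      ‖@inner ℂ _ _ x vmin‖ ^ 2 = ‖inner ℂ (b L) x‖ ^ 2 := fun x => by
    rw [← b.sum_inner_mul_inner, Finset.sum_eq_single L
      (fun i _ hi => by rw [hv_off i hi, mul_zero]) (by simp), norm_mul, hv_norm, mul_one,
      norm_inner_symm]
  -- Rayleigh quotients dominate the convex combination of `l1` and `l2`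
  have hray : ∀ x : EuclideanSpace ℂ (Fin n), ‖x‖ = 1 →
      l1 * ‖inner ℂ (b L) x‖ ^ 2 + l2 * (1 - ‖inner ℂ (b L) x‖ ^ 2) ≤ ‖mulE A x‖ ^ 2 := by
    intro x hx
    have e1 := norm_mulE_sq_eq_sum b hb x
    have e2 := b.sum_sq_norm_inner_right x
    rw [hx, ← Finset.add_sum_erase _ _ (Finset.mem_univ L)] at e2
    rw [← Finset.add_sum_erase _ _ (Finset.mem_univ L)] at e1
    have e3 : l2 * ∑ i ∈ Finset.univ.erase L, ‖inner ℂ (b i) x‖ ^ 2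
        ≤ ∑ i ∈ Finset.univ.erase L, σ i ^ 2 * ‖inner ℂ (b i) x‖ ^ 2 := by
      rw [Finset.mul_sum]
      refine Finset.sum_le_sum fun i hi => ?_
      exact mul_le_mul_of_nonneg_right (hlam2 i (Finset.ne_of_mem_erase hi)) (by positivity)
    have e4 : 1 - ‖inner ℂ (b L) x‖ ^ 2
        = ∑ i ∈ Finset.univ.erase L, ‖inner ℂ (b i) x‖ ^ 2 := by linarith
    rw [e1, e4]
    linarith
  have hcos1 : ∀ x : EuclideanSpace ℂ (Fin n), ‖x‖ = 1 → ‖inner ℂ (b L) x‖ ^ 2 ≤ 1 := by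
    intro x hx
    have h := norm_inner_le_norm (𝕜 := ℂ) (b L) x
    rw [hx, b.norm_eq_one, mul_one] at h
    exact pow_le_one₀ (norm_nonneg _) h
  have hrl : ∀ x : EuclideanSpace ℂ (Fin n), ‖x‖ = 1 → l1 ≤ ‖mulE A x‖ ^ 2 := fun x hx => by
    nlinarith [hray x hx, hcos1 x hx]
  -- `S A` is injective by the lower embedding bound
  have hs : ∀ i, 0 < s i := by
    intro i
    refine lt_of_le_of_ne (hs0 i) fun h0 => ?_
    have h := norm_mulE_svd hU hSVD (mulE V (EuclideanSpace.single i 1))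
    rw [← mulE_mul Vᴴ, hV, mulE_one, Finset.sum_eq_zero] at h
    · have h2 := (hS (mulE V (EuclideanSpace.single i 1))).1
      have h3 := hrl (mulE V (EuclideanSpace.single i 1))
        (by rw [norm_mulE_of_isometry hV]; simp)
      rw [h] at h2
      nlinarith
    · intro k _
      by_cases hk : k = i
      · rw [hk, ← h0]; simp
      · simp [hk]
  have hPP := preconditioner_spec hU hV (fun i => (hs i).ne') hSVD hP
  have hwN : ∀ i, mulE (S * A)ᴴ (mulE (S * A) (w i))
      = mulE Aᴴ (mulE A (v i)) - ((‖mulE A (v i)‖ ^ 2 : ℝ) : ℂ) • v i := fun i => by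
    rw [hw, ← mulE_mul P, ← mulE_mul, ← mulE_mul, hPP, mulE_one]
  -- `v 0` minimizes `‖S A u‖` over unit vectors; compare with `vmin` through the embedding
  have hρ0 : (1 - η) * ‖mulE A (v 0)‖ ^ 2 ≤ (1 + η) * l1 := by
    subst he
    have h := initial_rayleigh_bound hU hV hs hSVD hP L (fun i => hsa (hle i)) (v 0) hv0
      (hunit 0) vmin hvmin1
    have h2 : ‖mulE A vmin‖ ^ 2 = l1 := by
      rw [norm_mulE_sq_eq_sum b hb, Finset.sum_eq_single L
        (fun i _ hi => by rw [hv_off i hi]; simp) (by simp), hv_norm]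
      simp [hl1]
    have h3 := (hS vmin).2
    rw [h2] at h3
    exact (hS (v 0)).1.trans (h.trans h3)
  have hmono : ∀ k, ‖mulE A (v (k + 1))‖ ^ 2 ≤ ‖mulE A (v k)‖ ^ 2 := fun k =>
    pow_le_pow_left₀ (norm_nonneg _)
      (hmin k (v k) (Submodule.subset_span (by simp)) (hunit k)) 2
  have hlt : ∀ k, ‖mulE A (v k)‖ ^ 2 < l2 := by
    intro k
    induction k with
    | zero =>
      have : (1 - η) * ‖mulE A (v 0)‖ ^ 2 < (1 - η) * l2 := by rw [hl2g]; nlinarith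
      exact lt_of_mul_lt_mul_left this (by linarith)
    | succ k ih => exact (hmono k).trans_lt ih
  have hbase : ‖mulE A (v 0)‖ ^ 2 - l1 ≤ C * (l2 - ‖mulE A (v 0)‖ ^ 2) := by
    rw [hC, div_mul_eq_mul_div, le_div_iff₀ hden, hl2g]
    nlinarith
  have hstep : ∀ k, (‖mulE A (v (k + 1))‖ ^ 2 - l1) * (l2 - ‖mulE A (v k)‖ ^ 2)
      ≤ q ^ 2 * (‖mulE A (v k)‖ ^ 2 - l1) * (l2 - ‖mulE A (v (k + 1))‖ ^ 2) := by
    intro k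
    have hk1 := hrl (v k) (hunit k)
    have hk2 := hlt k
    rcases hη0.eq_or_lt with h0 | hη
    · -- without distortion the initial vector is already an eigenvector
      have hall : ∀ k, ‖mulE A (v k)‖ ^ 2 ≤ l1 := by
        intro k
        induction k with
        | zero => rw [← h0] at hρ0; linarith
        | succ k ih => exact (hmono k).trans ih
      have e1 := le_antisymm (hall k) hk1
      have e2 := le_antisymm (hall (k + 1)) (hrl _ (hunit (k + 1)))
      rw [e1, e2]; simp
    · obtain ⟨y, hys, hy0, hy⟩ := rayleigh_step h1 h12 hη hη1 hS hq' b _ hb hlam (v k) (w k)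
        (hunit k) _ rfl hk1 hk2 (hwN k)
      have hyn : 0 < ‖y‖ := norm_pos_iff.mpr hy0
      have hz := hmin k (((‖y‖⁻¹ : ℝ) : ℂ) • y) (Submodule.smul_mem _ _
        (Submodule.span_mono (by intro t ht; simp at ht ⊢; tauto) hys))
        (by rw [norm_smul, Complex.norm_real, norm_inv, norm_norm, inv_mul_cancel₀ hyn.ne'])
      have hz2 := pow_le_pow_left₀ (norm_nonneg _) hz 2
      have e : ‖mulE A (((‖y‖⁻¹ : ℝ) : ℂ) • y)‖ ^ 2 = ‖mulE A y‖ ^ 2 / ‖y‖ ^ 2 := by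
        rw [mulE, map_smul, norm_smul, Complex.norm_real, norm_inv, norm_norm, mul_pow, inv_pow,
          div_eq_inv_mul]
        rfl
      rw [e, le_div_iff₀ (by positivity)] at hz2
      set ρ := ‖mulE A (v k)‖ ^ 2
      have hE : 0 ≤ l2 - ρ + q ^ 2 * (ρ - l1) := by
        have : 0 ≤ l2 - ρ := by linarith
        have : 0 ≤ ρ - l1 := by linarith
        positivity
      have h3 := (mul_le_mul_of_nonneg_left hz2 hE).trans hy
      rw [← mul_assoc] at h3
      have h4 := le_of_mul_le_mul_right h3 (by positivity)
      linarith
  have hmain : ∀ k, ‖mulE A (v k)‖ ^ 2 - l1 ≤ C * (q ^ k) ^ 2 * (l2 - ‖mulE A (v k)‖ ^ 2) := by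
    intro k
    induction k with
    | zero => simpa using hbase
    | succ k ih =>
      have hk2 : 0 < l2 - ‖mulE A (v k)‖ ^ 2 := by linarith [hlt k]
      have hk3 : 0 < l2 - ‖mulE A (v (k + 1))‖ ^ 2 := by linarith [hlt (k + 1)]
      refine le_of_mul_le_mul_right ((hstep k).trans ?_) hk2
      calc q ^ 2 * (‖mulE A (v k)‖ ^ 2 - l1) * (l2 - ‖mulE A (v (k + 1))‖ ^ 2)
          ≤ q ^ 2 * (C * (q ^ k) ^ 2 * (l2 - ‖mulE A (v k)‖ ^ 2))
            * (l2 - ‖mulE A (v (k + 1))‖ ^ 2) := by gcongr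
        _ = _ := by ring
  intro k
  have hr := hray (v k) (hunit k)
  have hm := hmain k
  have hl := hlt k
  have hc1 := hcos1 (v k) (hunit k)
  rw [htan2, hsin2, hcos]
  set c := ‖inner ℂ (b L) (v k)‖ ^ 2
  have hc0 : 0 < c := by
    by_contra hc
    nlinarith
  rw [sub_sub_cancel]
  constructor
  · apply Real.sqrt_le_sqrt
    rw [le_div_iff₀ hc0]
    nlinarith
  · rw [← Real.sqrt_sq (pow_nonneg hq0 k), ← Real.sqrt_mul hC0]
    apply Real.sqrt_le_sqrt
    rw [div_le_iff₀ hc0]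
    have hQ : 0 ≤ C * (q ^ k) ^ 2 := by positivity
    have h5 : (l2 - l1) * (1 - c) ≤ (l2 - l1) * (C * (q ^ k) ^ 2 * c) := by
      nlinarith
    exact le_of_mul_le_mul_left h5 (by linarith)
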